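/- For any homeomorphism h : ℕ_τ → ℕ_τ of the Golomb space, any prime number p, and any n ∈ ℕ, one has h(1+p^nℕ₀) = 1+h(p)^nℕ₀. -/

import Mathlib

open TopologicalSpace

/-- The arithmetic progression `a + bℕ₀ = {a + b*n : n ≥ 0}` inside the positive integers. -/
def golombBasic (a b : ℕ) : Set ℕ+ := {x : ℕ+ | ∃ n : ℕ, (x : ℕ) = a + b * n}

/-- The Golomb topology on the positive integers, generated by the arithmetic
progressions `a + bℕ₀` with coprime `a, b ∈ ℕ`. -/
instance golombTopology : TopologicalSpace ℕ+ :=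
  generateFrom {S : Set ℕ+ | ∃ a b : ℕ, 0 < a ∧ 0 < b ∧ Nat.Coprime a b ∧ S = golombBasic a b}

/-- The positive integers not divisible by `p` (the set `ℕ \ pℕ`). -/
abbrev Np (p : ℕ) : Type := {x : ℕ+ // ¬ p ∣ (x : ℕ)}

/-- The `p`-adic topology on `ℕ \ pℕ`, generated by the traces of the sets
`x + p^nℕ₀`, `x, n ∈ ℕ`. -/
def padicTop (p : ℕ) : TopologicalSpace (Np p) :=
  generateFrom {S : Set (Np p) | ∃ x n : ℕ, 0 < x ∧ 0 < n ∧
    S = {y : Np p | ∃ k : ℕ, ((y : ℕ+) : ℕ) = x + p ^ n * k}}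

/-- Closure of a set of positive integers in the `p`-adic topology on `ℕ \ pℕ`,
viewed again as a set of positive integers. -/
def padicClosure (p : ℕ) (A : Set ℕ+) : Set ℕ+ :=
  Subtype.val '' (@closure (Np p) (padicTop p) (Subtype.val ⁻¹' A))

/-- `a^ℕ = {a^k : k ∈ ℕ}`, the set of positive powers of `a`. -/
def powSet (a : ℕ) : Set ℕ+ := {y : ℕ+ | ∃ k : ℕ, 0 < k ∧ (y : ℕ) = a ^ k}

/-- The closure of `a^ℕ` in the `p`-adic topology on `ℕ \ pℕ`. -/
def clPow (p a : ℕ) : Set ℕ+ := padicClosure p (powSet a)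

/-- The family `𝒳_p` of closures of the sets `a^ℕ` for `a ∈ ℕ \ pℕ`, `a ≠ 1`. -/
def XX (p : ℕ) : Set (Set ℕ+) := {X | ∃ a : ℕ, 0 < a ∧ a ≠ 1 ∧ ¬ p ∣ a ∧ X = clPow p a}

/-- The projection `π_n(X)` of a set of positive integers to `ℤ/p^nℤ`. -/
def pin (p n : ℕ) (X : Set ℕ+) : Set (ZMod (p ^ n)) :=
  (fun y : ℕ+ => ((y : ℕ) : ZMod (p ^ n))) '' X

/-- `n(X)`: the least `n ∈ ℕ` with `X = ℕ ∩ π_n⁻¹(π_n(X))` and `|π_n(X)| ≥ max(p,3)`. -/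
noncomputable def nX (p : ℕ) (X : Set ℕ+) : ℕ :=
  sInf {n : ℕ | 0 < n ∧ X = {y : ℕ+ | ((y : ℕ) : ZMod (p ^ n)) ∈ pin p n X} ∧
    max p 3 ≤ (pin p n X).ncard}

/-- `i(X)`: the index of the subgroup `π_{n(X)}(X)` in the group of units of `ℤ/p^{n(X)}ℤ`. -/
noncomputable def iX (p : ℕ) (X : Set ℕ+) : ℕ :=
  Nat.card ((ZMod (p ^ nX p X))ˣ) / (pin p (nX p X) X).ncard

/-!
A homeomorphism `h` of the Golomb space preserves coprimality of distinct numbers, since coprimality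
can be read off from the way closures of neighbourhoods intersect. Hence `h 1 = 1`, and `h` induces
a bijection `p ↔ q` of the primes under which the multiples of `p` go to those of `q` and the powers
of `p` to those of `q`. Moreover `h` is continuous from the `p`-adic to the `q`-adic topology off
the multiples of `p`. So it carries the closure of the powers of a prime in the `r`-adic topology,
which is the trace on `ℕ` of a topologically cyclic subgroup of `ℤ_r^×`, to the analogous closure
for the corresponding primes. By Dirichlet's theorem primes suffice as generators, and `h` induces
an isomorphism of the ordered sets `XX r` and `XX s` for corresponding `r` and `s`.

The groups `1 + r ^ n ℤ_r` can be recognised by order. For odd `r` and `n ≥ 1` they are the members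
of `XX r` below which `XX r` is a chain: in a group generated by `a ≢ 1` modulo `r`, the powers
`a ^ r` and `a ^ (r - 1)` generate incomparable subgroups. For `r = 2` and `n ≥ 3` they are the
non-maximal members of `XX 2`. Below any member, `XX 2` is a chain, which fails for `XX q` with `q`
odd, as `2 ≢ 1` modulo `q`; so the prime `2` is fixed. Two decreasing sequences with the same terms
agree, whence `1 + r ^ n ℕ₀` goes to `1 + s ^ n ℕ₀`. What remains is `1 + 2ℕ₀`, the complement of
the multiples of `2`, and `1 + 4ℕ₀`, the closure of the powers of `5`; the primes `3` and `5` are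
found to be fixed by computing with `h 3`, `h 4` and `h 5`.

Finally, `h p` is itself the prime `q` corresponding to `p`: it is a multiple of `q`, and `h p - 1`
divides `q - 1` because `p - 1` divides `p ^ j - 1` for the power `p ^ j` which `h` maps to `q`.
-/

/-! ### Arithmetic progressions and the Golomb topology -/

lemma mem_golombBasic {a b : ℕ} {x : ℕ+} :
    x ∈ golombBasic a b ↔ a ≤ x ∧ (x : ℕ) ≡ a [MOD b] := by
  constructor
  · rintro ⟨n, hn⟩
    exact ⟨hn ▸ Nat.le_add_right _ _, by simp [hn, Nat.ModEq]⟩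
  · rintro ⟨hax, hx⟩
    obtain ⟨n, hn⟩ := (Nat.modEq_iff_dvd' hax).1 hx.symm
    exact ⟨n, by omega⟩

lemma self_mem_golombBasic (x : ℕ+) (b : ℕ) : x ∈ golombBasic x b := ⟨0, by simp⟩

lemma mem_golombBasic_one {b : ℕ} {x : ℕ+} : x ∈ golombBasic 1 b ↔ (x : ℕ) ≡ 1 [MOD b] :=
  mem_golombBasic.trans (and_iff_right x.pos)

lemma golombBasic_one_subset_iff {b c : ℕ} : golombBasic 1 b ⊆ golombBasic 1 c ↔ c ∣ b := by
  constructor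
  · intro hsub
    obtain ⟨k, hk⟩ := hsub (a := ⟨1 + b, by omega⟩) ⟨1, by simp⟩
    exact ⟨k, Nat.add_left_cancel hk⟩
  · rintro ⟨k, rfl⟩ x ⟨n, hn⟩
    exact ⟨k * n, by rw [hn, mul_assoc]⟩

lemma strictAnti_golombBasic_one_pow {r : ℕ} (hr : 1 < r) :
    StrictAnti fun n => golombBasic 1 (r ^ n) := by
  intro m n hmn
  simp only [ssubset_iff_subset_not_subset, golombBasic_one_subset_iff,
    Nat.pow_dvd_pow_iff_le_right hr]
  omega

lemma isTopologicalBasis_golombBasic :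
    IsTopologicalBasis {S | ∃ a b : ℕ, 0 < a ∧ 0 < b ∧ a.Coprime b ∧ S = golombBasic a b} where
  exists_subset_inter := by
    rintro _ ⟨a, b, -, hb, hab, rfl⟩ _ ⟨c, d, -, hd, hcd, rfl⟩ x ⟨⟨m, hm⟩, n, hn⟩
    have hxb : (x : ℕ).Coprime b := by simpa [hm] using hab
    have hxd : (x : ℕ).Coprime d := by simpa [hn] using hcd
    refine ⟨golombBasic x (b * d), ⟨x, _, x.pos, Nat.mul_pos hb hd, hxb.mul_right hxd, rfl⟩,
      self_mem_golombBasic x _, ?_⟩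
    rintro y ⟨k, hk⟩
    exact ⟨⟨m + d * k, by rw [hk, hm]; ring⟩, n + b * k, by rw [hk, hn]; ring⟩
  sUnion_eq := Set.eq_univ_of_forall fun x =>
    ⟨golombBasic x 1, ⟨x, 1, x.pos, one_pos, Nat.coprime_one_right _, rfl⟩,
      self_mem_golombBasic x 1⟩
  eq_generateFrom := rfl

lemma isOpen_golombBasic {a b : ℕ} (ha : 0 < a) (hb : 0 < b) (hab : a.Coprime b) :
    IsOpen (golombBasic a b) :=
  isTopologicalBasis_golombBasic.isOpen ⟨a, b, ha, hb, hab, rfl⟩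

lemma golombBasic_mem_nhds {x : ℕ+} {b : ℕ} (hb : 0 < b) (hxb : (x : ℕ).Coprime b) :
    golombBasic x b ∈ nhds x :=
  (isOpen_golombBasic x.pos hb hxb).mem_nhds (self_mem_golombBasic x b)

lemma mem_nhds_iff_golombBasic {U : Set ℕ+} {x : ℕ+} :
    U ∈ nhds x ↔ ∃ b : ℕ, 0 < b ∧ (x : ℕ).Coprime b ∧ golombBasic x b ⊆ U := by
  constructor
  · intro hU
    obtain ⟨_, ⟨a, b, -, hb, hab, rfl⟩, ⟨n, hn⟩, hsub⟩ :=
      isTopologicalBasis_golombBasic.mem_nhds_iff.1 hU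
    refine ⟨b, hb, by simpa [hn] using hab, Set.Subset.trans ?_ hsub⟩
    rintro y ⟨k, hk⟩
    exact ⟨n + k, by rw [hk, hn]; ring⟩
  · rintro ⟨b, hb, hxb, hsub⟩
    exact Filter.mem_of_superset (golombBasic_mem_nhds hb hxb) hsub

lemma exists_ge_modEq_modEq {m n : ℕ} (hm : 0 < m) (hn : 0 < n) {a b : ℕ}
    (hab : a ≡ b [MOD m.gcd n]) (N : ℕ) :
    ∃ w : ℕ+, N ≤ w ∧ (w : ℕ) ≡ a [MOD m] ∧ (w : ℕ) ≡ b [MOD n] := by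
  obtain ⟨w, hwa, hwb⟩ := Nat.chineseRemainder' hab
  have hle : N + 1 ≤ m * n * (N + 1) := Nat.le_mul_of_pos_left _ (Nat.mul_pos hm hn)
  refine ⟨⟨w + m * n * (N + 1), by omega⟩, by simp only [PNat.mk_coe]; omega, ?_, ?_⟩
  · simpa [Nat.ModEq, mul_assoc] using hwa
  · simpa [Nat.ModEq, mul_assoc, mul_left_comm m n] using hwb

lemma exists_dvd_modEq {m c : ℕ} (hm : 0 < m) (hc : 0 < c) (hmc : m.Coprime c) (a : ℕ) :
    ∃ w : ℕ+, c ∣ w ∧ (w : ℕ) ≡ a [MOD m] := by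
  obtain ⟨w, -, hwa, hwc⟩ := exists_ge_modEq_modEq hm hc (a := a) (b := 0)
    (by rw [hmc]; exact Nat.modEq_one) 0
  exact ⟨w, Nat.modEq_zero_iff_dvd.1 hwc, hwa⟩

lemma closure_golombBasic (a : ℕ) {b : ℕ} (hb : 0 < b) :
    closure (golombBasic a b) =
      {w : ℕ+ | ∀ d, d ∣ b → d.Coprime w → (w : ℕ) ≡ a [MOD d]} := by
  ext w
  simp only [mem_closure_iff_nhds, Set.mem_ofPred_eq]
  constructor
  · intro hw d hdb hdw
    obtain ⟨y, hyw, hya⟩ := hw _ (golombBasic_mem_nhds (Nat.pos_of_dvd_of_pos hdb hb) hdw.symm)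
    exact (mem_golombBasic.1 hyw).2.symm.trans ((mem_golombBasic.1 hya).2.of_dvd hdb)
  · intro hw U hU
    obtain ⟨c, hc, hwc, hsub⟩ := mem_nhds_iff_golombBasic.1 hU
    obtain ⟨y, hle, hyw, hya⟩ := exists_ge_modEq_modEq hc hb
      (hw _ (Nat.gcd_dvd_right c b) (hwc.symm.coprime_dvd_left (Nat.gcd_dvd_left c b))) (max w a)
    exact ⟨y, hsub (mem_golombBasic.2 ⟨(le_max_left _ _).trans hle, hyw⟩),
      mem_golombBasic.2 ⟨(le_max_right _ _).trans hle, hya⟩⟩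

lemma mem_closure_golombBasic_prime_pow {p : ℕ} (hp : p.Prime) {n a : ℕ} {w : ℕ+} :
    w ∈ closure (golombBasic a (p ^ n)) ↔ p ∣ w ∨ (w : ℕ) ≡ a [MOD p ^ n] := by
  rw [closure_golombBasic a (pow_pos hp.pos n)]
  constructor
  · exact fun hw => or_iff_not_imp_left.2 fun hpw =>
      hw _ dvd_rfl ((hp.coprime_iff_not_dvd.2 hpw).pow_left n)
  · rintro (hpw | hw) d hd hdw
    · have : d.Coprime (p ^ n) := (hdw.coprime_dvd_right hpw).pow_right n
      rw [Nat.Coprime.eq_one_of_dvd this hd]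
      exact Nat.modEq_one
    · exact hw.of_dvd hd

lemma exists_forall_mem_closure {U : Set ℕ+} {x : ℕ+} (hU : U ∈ nhds x) {p : ℕ} (hp : p.Prime) :
    ∃ c n : ℕ, 0 < c ∧ p.Coprime c ∧
      ∀ w : ℕ+, c ∣ w → (p ∣ x ∨ (w : ℕ) ≡ x [MOD p ^ n]) → w ∈ closure U := by
  obtain ⟨b, hb, hxb, hsub⟩ := mem_nhds_iff_golombBasic.1 hU
  obtain ⟨n, c, hpc, rfl⟩ := Nat.exists_eq_pow_mul_and_not_dvd hb.ne' p hp.ne_one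
  refine ⟨c, n, Nat.pos_of_mul_pos_left hb, hp.coprime_iff_not_dvd.2 hpc, fun w hcw hw => ?_⟩
  refine closure_mono hsub ?_
  rw [closure_golombBasic _ hb]
  intro d hd hdw
  have hdp : d ∣ p ^ n := (hdw.coprime_dvd_right hcw).dvd_of_dvd_mul_right hd
  rcases hw with hpx | hw
  · have hcop : d.Coprime (p ^ n) :=
      ((hxb.coprime_dvd_left hpx).symm.coprime_dvd_left hd).symm.pow_left n |>.symm
    rw [hcop.eq_one_of_dvd hdp]
    exact Nat.modEq_one
  · exact hw.of_dvd hdp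

lemma mem_closure_golombBasic_of_forall_prime_dvd (a : ℕ) {b : ℕ} (hb : 0 < b) {w : ℕ+}
    (hw : ∀ p : ℕ, p.Prime → p ∣ b → p ∣ w) : w ∈ closure (golombBasic a b) := by
  rw [closure_golombBasic a hb]
  intro d hdb hdw
  have hd : d = 1 := by
    by_contra hd
    obtain ⟨p, hp, hpd⟩ := Nat.exists_prime_and_dvd hd
    exact Nat.not_coprime_of_dvd_of_dvd hp.one_lt hpd (hw p hp (hpd.trans hdb)) hdw
  rw [hd]
  exact Nat.modEq_one

lemma exists_mem_nhds_forall_prime_dvd (x : ℕ+) {b : ℕ} (hb : b ≠ 0) (n : ℕ) :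
    ∃ U ∈ nhds x, ∀ w ∈ closure U, ∀ p : ℕ, p.Prime → p ∣ b → ¬ p ∣ x →
      p ∣ w ∨ (w : ℕ) ≡ x [MOD p ^ n] := by
  refine ⟨⋂ p ∈ b.primeFactors.filter fun p => ¬ p ∣ (x : ℕ), golombBasic x (p ^ n),
    (Filter.biInter_finset_mem _).2 fun p hpb => ?_, fun w hw p hp hpb hpx => ?_⟩
  · obtain ⟨hpb, hpx⟩ := Finset.mem_filter.1 hpb
    have hp := Nat.prime_of_mem_primeFactors hpb
    exact golombBasic_mem_nhds (pow_pos hp.pos n)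
      ((hp.coprime_iff_not_dvd.2 hpx).symm.pow_right n)
  · refine (mem_closure_golombBasic_prime_pow hp).1 (closure_mono ?_ hw)
    exact Set.biInter_subset_of_mem (by simp [hp, hpb, hb, hpx])

/-! ### Homeomorphisms preserve coprimality -/

/-- A topological relation which, between distinct points of the Golomb space, amounts to
coprimality: for some point `z` and any nonempty open set `O`, the points `x`, `y`, `z` have
neighbourhoods the closures of which meet inside the closure of `O`. -/
def TopCoprime {X : Type*} [TopologicalSpace X] (x y : X) : Prop :=
  ∃ z : X, ∀ O : Set X, IsOpen O → O.Nonempty →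
    ∃ U ∈ nhds x, ∃ V ∈ nhds y, ∃ W ∈ nhds z, closure U ∩ closure V ∩ closure W ⊆ closure O

namespace TopCoprime

lemma map {X Y : Type*} [TopologicalSpace X] [TopologicalSpace Y] (h : X ≃ₜ Y) {x y : X}
    (hxy : TopCoprime x y) : TopCoprime (h x) (h y) := by
  obtain ⟨z, hz⟩ := hxy
  refine ⟨h z, fun O hO hne => ?_⟩
  obtain ⟨U, hU, V, hV, W, hW, hsub⟩ :=
    hz (h ⁻¹' O) (hO.preimage h.continuous) (hne.preimage h.surjective)
  refine ⟨h '' U, h.isOpenMap.image_mem_nhds hU, h '' V, h.isOpenMap.image_mem_nhds hV,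
    h '' W, h.isOpenMap.image_mem_nhds hW, ?_⟩
  simpa only [← h.image_closure, ← Set.image_inter h.injective, Set.image_subset_iff,
    h.preimage_closure] using hsub

lemma coprime {x y : ℕ+} (hxy : TopCoprime x y) : (x : ℕ).Coprime y := by
  by_contra hne
  obtain ⟨p, hp, hpx, hpy⟩ := Nat.Prime.not_coprime_iff_dvd.1 hne
  obtain ⟨z, hz⟩ := hxy
  -- Only `z` can impose a condition at `p`, and `c` is a residue that satisfies it.
  obtain ⟨c, hpc, hcz⟩ : ∃ c : ℕ, ¬ p ∣ c ∧ (p ∣ z ∨ c = z) := by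
    by_cases hpz : p ∣ z
    · exact ⟨1, hp.not_dvd_one, Or.inl hpz⟩
    · exact ⟨z, hpz, Or.inr rfl⟩
  have hcop : (c + p).Coprime (p ^ 2) :=
    (Nat.coprime_add_self_left.2 (hp.coprime_iff_not_dvd.2 hpc).symm).pow_right 2
  obtain ⟨U, hU, V, hV, W, hW, hsub⟩ := hz (golombBasic (c + p) (p ^ 2))
    (isOpen_golombBasic (Nat.add_pos_right c hp.pos) (pow_pos hp.pos 2) hcop)
    ⟨⟨c + p, Nat.add_pos_right c hp.pos⟩, self_mem_golombBasic _ _⟩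
  obtain ⟨c₁, _, hc₁, hpc₁, h₁⟩ := exists_forall_mem_closure hU hp
  obtain ⟨c₂, _, hc₂, hpc₂, h₂⟩ := exists_forall_mem_closure hV hp
  obtain ⟨c₃, n, hc₃, hpc₃, h₃⟩ := exists_forall_mem_closure hW hp
  obtain ⟨w, hdvd, hwc⟩ := exists_dvd_modEq (pow_pos hp.pos (n + 2)) (by positivity)
    (((hpc₁.mul_right hpc₂).mul_right hpc₃).pow_left (n + 2)) c
  have hpw : ¬ p ∣ w := fun hpw => hpc ((hwc.dvd_iff (dvd_pow_self p (by omega))).1 hpw)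
  have hw : w ∈ closure (golombBasic (c + p) (p ^ 2)) := by
    refine hsub ⟨⟨h₁ w (dvd_trans ⟨c₂ * c₃, by ring⟩ hdvd) (Or.inl hpx),
      h₂ w (dvd_trans ⟨c₁ * c₃, by ring⟩ hdvd) (Or.inl hpy)⟩,
      h₃ w (dvd_trans ⟨c₁ * c₂, by ring⟩ hdvd) (hcz.imp_right ?_)⟩
    rintro rfl
    exact hwc.of_dvd (pow_dvd_pow p (by omega))
  have hcp : c + 0 ≡ c + p [MOD p ^ 2] :=
    (hwc.of_dvd (pow_dvd_pow p (by omega))).symm.trans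
      (((mem_closure_golombBasic_prime_pow hp).1 hw).resolve_left hpw)
  have hdvd : p ^ 2 ∣ p ^ 1 := by
    simpa using Nat.modEq_zero_iff_dvd.1 (Nat.ModEq.add_left_cancel' c hcp).symm
  have := (Nat.pow_dvd_pow_iff_le_right hp.one_lt).1 hdvd
  omega

end TopCoprime

lemma topCoprime_of_coprime {x y : ℕ+} (hne : x ≠ y) (hxy : (x : ℕ).Coprime y) :
    TopCoprime x y := by
  refine ⟨x * y + 1, fun O hO ⟨a, ha⟩ => ?_⟩
  obtain ⟨b, hb, -, hbO⟩ := mem_nhds_iff_golombBasic.1 (hO.mem_nhds ha)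
  generalize hz : x * y + 1 = z
  have hz : (z : ℕ) = x * y + 1 := by simp [← hz]
  have hxz : (x : ℕ) < z := hz ▸ Nat.lt_succ_of_le (Nat.le_mul_of_pos_right _ y.pos)
  have hyz : (y : ℕ) < z := hz ▸ Nat.lt_succ_of_le (Nat.le_mul_of_pos_left _ x.pos)
  have hxz' : (x : ℕ).Coprime z := by simp [hz]
  have hyz' : (y : ℕ).Coprime z := by simp [hz]
  obtain ⟨U, hU, hwU⟩ := exists_mem_nhds_forall_prime_dvd x hb.ne' z
  obtain ⟨V, hV, hwV⟩ := exists_mem_nhds_forall_prime_dvd y hb.ne' z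
  obtain ⟨W, hW, hwW⟩ := exists_mem_nhds_forall_prime_dvd z hb.ne' z
  refine ⟨U, hU, V, hV, W, hW, fun w ⟨⟨hxw, hyw⟩, hzw⟩ => closure_mono hbO ?_⟩
  refine mem_closure_golombBasic_of_forall_prime_dvd a hb fun p hp hpb => ?_
  have hlt : (z : ℕ) < p ^ (z : ℕ) := Nat.lt_pow_self hp.one_lt
  have not_dvd {u v : ℕ} (huv : u.Coprime v) (hpu : p ∣ u) : ¬ p ∣ v := fun hpv =>
    Nat.not_coprime_of_dvd_of_dvd hp.one_lt hpu hpv huv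
  have dvd_of_lt {u v : ℕ} (huv : u ≠ v) (hu : u < p ^ (z : ℕ)) (hv : v < p ^ (z : ℕ))
      (hwu : p ∣ w ∨ (w : ℕ) ≡ u [MOD p ^ (z : ℕ)])
      (hwv : p ∣ w ∨ (w : ℕ) ≡ v [MOD p ^ (z : ℕ)]) : p ∣ w :=
    hwu.elim id fun hwu => hwv.resolve_right fun hwv =>
      huv ((hwu.symm.trans hwv).eq_of_lt_of_lt hu hv)
  by_cases hpx : p ∣ x
  · exact dvd_of_lt hyz.ne (hyz.trans hlt) hlt (hwV w hyw p hp hpb (not_dvd hxy hpx))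
      (hwW w hzw p hp hpb (not_dvd hxz' hpx))
  by_cases hpy : p ∣ y
  · exact dvd_of_lt hxz.ne (hxz.trans hlt) hlt (hwU w hxw p hp hpb hpx)
      (hwW w hzw p hp hpb (not_dvd hyz' hpy))
  · exact dvd_of_lt (PNat.coe_injective.ne hne) (hxz.trans hlt) (hyz.trans hlt)
      (hwU w hxw p hp hpb hpx) (hwV w hyw p hp hpb hpy)

lemma coprime_apply_iff (h : ℕ+ ≃ₜ ℕ+) {x y : ℕ+} (hne : x ≠ y) :
    (h x : ℕ).Coprime (h y) ↔ (x : ℕ).Coprime y := by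
  refine ⟨fun hc => ?_, fun hc => ((topCoprime_of_coprime hne hc).map h).coprime⟩
  simpa using ((topCoprime_of_coprime (h.injective.ne hne) hc).map h.symm).coprime

lemma golomb_homeo_apply_one (h : ℕ+ ≃ₜ ℕ+) : h 1 = 1 := by
  -- `h 1` is coprime to its square, which would otherwise be a different number.
  by_contra h1
  have hlt : 1 < h 1 := lt_of_le_of_ne' one_le h1
  have hne : 1 ≠ h.symm (h 1 * h 1) := fun e => by
    have := congrArg h e
    rw [h.apply_symm_apply] at this
    exact h1 (by simpa using this)
  have hc := (coprime_apply_iff h hne).2 (by simp)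
  rw [h.apply_symm_apply, PNat.mul_coe] at hc
  exact Nat.not_coprime_of_dvd_of_dvd (by exact_mod_cast hlt) dvd_rfl (dvd_mul_right _ _) hc

/-! ### The correspondence of primes -/

lemma prime_dvd_iff_not_coprime_apply (h : ℕ+ ≃ₜ ℕ+) {p x : ℕ+} (hp : (p : ℕ).Prime) :
    (p : ℕ) ∣ x ↔ ¬ (h p : ℕ).Coprime (h x) := by
  rcases eq_or_ne p x with rfl | hpx
  · have h1 : h p ≠ 1 := fun e => hp.ne_one <| PNat.coe_eq_one_iff.2 <|
      h.injective (e.trans (golomb_homeo_apply_one h).symm)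
    simpa using h1
  · rw [coprime_apply_iff h hpx, hp.coprime_iff_not_dvd, not_not]

lemma eq_of_prime_dvd_apply (h : ℕ+ ≃ₜ ℕ+) {p : ℕ+} (hp : (p : ℕ).Prime) {s t : ℕ}
    (hs : s.Prime) (ht : t.Prime) (hsp : s ∣ h p) (htp : t ∣ h p) : s = t := by
  -- Distinct prime divisors of `h p` would be the images of two coprime multiples of `p`.
  by_contra hst
  lift s to ℕ+ using hs.pos
  lift t to ℕ+ using ht.pos
  have dvd_symm {u : ℕ+} (hu : (u : ℕ).Prime) (hup : (u : ℕ) ∣ h p) : (p : ℕ) ∣ h.symm u := by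
    rw [prime_dvd_iff_not_coprime_apply h hp, h.apply_symm_apply]
    exact Nat.not_coprime_of_dvd_of_dvd hu.one_lt hup dvd_rfl
  refine Nat.not_coprime_of_dvd_of_dvd hp.one_lt (dvd_symm hs hsp) (dvd_symm ht htp) ?_
  rw [coprime_apply_iff h.symm (ne_of_apply_ne PNat.val hst)]
  exact (Nat.coprime_primes hs ht).2 hst

/-- The primes `p` and `q` correspond to each other under `h`: a number is a multiple of `p` if and
only if its image is a multiple of `q`. -/
structure PrimeCorr (h : ℕ+ ≃ₜ ℕ+) (p q : ℕ) : Prop where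
  left : p.Prime
  right : q.Prime
  dvd_iff : ∀ x : ℕ+, p ∣ x ↔ q ∣ h x

lemma mem_powSet_iff {p : ℕ} (hp : p.Prime) {y : ℕ+} :
    y ∈ powSet p ↔ ∀ s : ℕ, s.Prime → (s ∣ y ↔ s = p) := by
  constructor
  · rintro ⟨k, hk, hy⟩ s hs
    rw [hy, ← Nat.prime_dvd_prime_iff_eq hs hp]
    exact ⟨hs.dvd_of_dvd_pow, fun hsp => dvd_pow hsp hk.ne'⟩
  · intro hy
    have hpow := Nat.eq_prime_pow_of_unique_prime_dvd y.ne_zero fun {s} hs => (hy s hs).1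
    refine ⟨_, Nat.pos_of_ne_zero fun h0 => hp.not_dvd_one ?_, hpow⟩
    rw [h0, pow_zero] at hpow
    exact hpow ▸ (hy p hp).2 rfl

namespace PrimeCorr

variable {h : ℕ+ ≃ₜ ℕ+} {p q p' q' : ℕ}

lemma symm (H : PrimeCorr h p q) : PrimeCorr h.symm q p :=
  ⟨H.right, H.left, fun x => by rw [H.dvd_iff, h.apply_symm_apply]⟩

lemma of_dvd_apply (h : ℕ+ ≃ₜ ℕ+) {p : ℕ+} (hp : (p : ℕ).Prime) (hq : q.Prime) (hqp : q ∣ h p) :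
    PrimeCorr h p q := by
  refine ⟨hp, hq, fun x => ?_⟩
  rw [prime_dvd_iff_not_coprime_apply h hp]
  refine ⟨fun hx => ?_, Nat.not_coprime_of_dvd_of_dvd hq.one_lt hqp⟩
  obtain ⟨s, hs, hsp, hsx⟩ := Nat.Prime.not_coprime_iff_dvd.1 hx
  rwa [eq_of_prime_dvd_apply h hp hq hs hqp hsp]

lemma exists_right (h : ℕ+ ≃ₜ ℕ+) (hp : p.Prime) : ∃ q, PrimeCorr h p q := by
  lift p to ℕ+ using hp.pos
  have h1 : (h p : ℕ) ≠ 1 := by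
    simpa using (prime_dvd_iff_not_coprime_apply h hp (x := p)).1 dvd_rfl
  exact ⟨_, of_dvd_apply h hp (Nat.minFac_prime h1) (Nat.minFac_dvd _)⟩

lemma exists_left (h : ℕ+ ≃ₜ ℕ+) (hq : q.Prime) : ∃ p, PrimeCorr h p q :=
  (exists_right h.symm hq).imp fun _ H => H.symm

lemma left_unique (H : PrimeCorr h p q) (H' : PrimeCorr h p' q) : p = p' := by
  have hdvd := (H'.dvd_iff ⟨p, H.left.pos⟩).2 ((H.dvd_iff ⟨p, H.left.pos⟩).1 dvd_rfl)
  exact ((Nat.prime_dvd_prime_iff_eq H'.left H.left).1 hdvd).symm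

lemma right_unique (H : PrimeCorr h p q) (H' : PrimeCorr h p q') : q = q' :=
  H.symm.left_unique H'.symm

lemma apply_mem_powSet (H : PrimeCorr h p q) {x : ℕ+} (hx : x ∈ powSet p) : h x ∈ powSet q := by
  refine (mem_powSet_iff H.right).2 fun s hs => ?_
  obtain ⟨r, Hr⟩ := exists_left h hs
  rw [← Hr.dvd_iff, (mem_powSet_iff H.left).1 hx r Hr.left]
  constructor
  · rintro rfl
    exact Hr.right_unique H
  · rintro rfl
    exact Hr.left_unique H

lemma image_powSet (H : PrimeCorr h p q) : h '' powSet p = powSet q := by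
  refine Set.Subset.antisymm (Set.image_subset_iff.2 fun x => H.apply_mem_powSet) fun y hy => ?_
  exact ⟨h.symm y, H.symm.apply_mem_powSet hy, h.apply_symm_apply y⟩

end PrimeCorr

/-! ### The `p`-adic topologies -/

lemma isTopologicalBasis_padicTop (p : ℕ) :
    @IsTopologicalBasis (Np p) (padicTop p)
      {S | ∃ x n : ℕ, 0 < x ∧ 0 < n ∧ S = Subtype.val ⁻¹' golombBasic x (p ^ n)} :=
  letI := padicTop p
  { exists_subset_inter := by
      rintro _ ⟨a, m, -, hm, rfl⟩ _ ⟨b, n, -, -, rfl⟩ y ⟨⟨k, hk⟩, l, hl⟩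
      refine ⟨_, ⟨y, m + n, y.1.pos, Nat.add_pos_left hm n, rfl⟩, self_mem_golombBasic y.1 _, ?_⟩
      rintro z ⟨j, hj⟩
      exact ⟨⟨k + p ^ n * j, by rw [hj, hk]; ring⟩, l + p ^ m * j, by rw [hj, hl]; ring⟩
    sUnion_eq := Set.eq_univ_of_forall fun y =>
      ⟨_, ⟨y, 1, y.1.pos, one_pos, rfl⟩, self_mem_golombBasic y.1 _⟩
    eq_generateFrom := rfl }

lemma mem_padicClosure {p : ℕ} (hp : 1 < p) {A : Set ℕ+} {y : ℕ+} :
    y ∈ padicClosure p A ↔ ¬ p ∣ y ∧ ∀ n, ∃ a ∈ A, (a : ℕ) ≡ y [MOD p ^ n] := by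
  let _ := padicTop p
  have hbasis := isTopologicalBasis_padicTop p
  constructor
  · rintro ⟨y, hy, rfl⟩
    refine ⟨y.2, fun n => ?_⟩
    obtain ⟨a, hay, ha⟩ := hbasis.mem_closure_iff.1 hy _
      ⟨y, n + 1, y.1.pos, n.succ_pos, rfl⟩ (self_mem_golombBasic y.1 _)
    exact ⟨a, ha, (mem_golombBasic.1 hay).2.of_dvd (pow_dvd_pow p n.le_succ)⟩
  · rintro ⟨hpy, hy⟩
    refine ⟨⟨y, hpy⟩, hbasis.mem_closure_iff.2 ?_, rfl⟩
    rintro _ ⟨x, n, -, hn, rfl⟩ hyx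
    obtain ⟨hxy, hyx⟩ := mem_golombBasic.1 hyx
    obtain ⟨a, ha, hay⟩ := hy (n + y)
    have hlt : (y : ℕ) < p ^ (n + y : ℕ) :=
      (Nat.lt_pow_self hp).trans_le (Nat.pow_le_pow_right hp.le (Nat.le_add_left _ _))
    have hya : (y : ℕ) ≤ a := calc
      (y : ℕ) = y % p ^ (n + y : ℕ) := (Nat.mod_eq_of_lt hlt).symm
      _ = a % p ^ (n + y : ℕ) := hay.symm
      _ ≤ a := Nat.mod_le _ _
    have hay : (a : ℕ) ≡ y [MOD p ^ n] := hay.of_dvd (pow_dvd_pow p (Nat.le_add_right n y))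
    have hpa : ¬ p ∣ a := fun hpa => hpy ((hay.dvd_iff (dvd_pow_self p hn.ne')).1 hpa)
    exact ⟨⟨a, hpa⟩, mem_golombBasic.2 ⟨hxy.trans hya, hay.trans hyx⟩, ha⟩

namespace PrimeCorr

variable {h : ℕ+ ≃ₜ ℕ+} {p q p' q' : ℕ}

lemma exists_forall_apply_modEq (H : PrimeCorr h p q) {x : ℕ+} (hx : ¬ p ∣ x) (m : ℕ) :
    ∃ c n : ℕ, 0 < c ∧ p.Coprime c ∧ ∀ w : ℕ+, ¬ p ∣ w → c ∣ w → (w : ℕ) ≡ x [MOD p ^ n] →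
      (h w : ℕ) ≡ h x [MOD q ^ m] := by
  have hqx : (h x : ℕ).Coprime (q ^ m) :=
    (H.right.coprime_iff_not_dvd.2 (by rwa [← H.dvd_iff])).symm.pow_right m
  obtain ⟨c, n, hc, hpc, hcl⟩ := exists_forall_mem_closure
    (h.continuous.continuousAt (golombBasic_mem_nhds (pow_pos H.right.pos m) hqx)) H.left
  refine ⟨c, n, hc, hpc, fun w hpw hcw hwx => ?_⟩
  have hw : w ∈ h ⁻¹' closure (golombBasic (h x) (q ^ m)) := by
    rw [h.preimage_closure]
    exact hcl w hcw (Or.inr hwx)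
  exact ((mem_closure_golombBasic_prime_pow H.right).1 hw).resolve_left (by rwa [← H.dvd_iff])

/-- If `z` is `p`-adically close to `x`, then the closures of any neighbourhoods of `x` and `z`
share a number prime to `p`, whereas those of two distinct residue classes modulo `q ^ m` share only
multiples of `q`. -/
lemma exists_modEq_imp_apply_modEq (H : PrimeCorr h p q) {x : ℕ+} (hx : ¬ p ∣ x) (m : ℕ) :
    ∃ n, ∀ z : ℕ+, (z : ℕ) ≡ x [MOD p ^ n] → (h z : ℕ) ≡ h x [MOD q ^ m] := by
  obtain ⟨c, k, hc, hpc, hcx⟩ := H.exists_forall_apply_modEq hx m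
  have hdvd : p ∣ p ^ (k + 1) := dvd_pow_self p k.succ_ne_zero
  refine ⟨k + 1, fun z hzx => ?_⟩
  have hpz : ¬ p ∣ z := fun hpz => hx ((hzx.dvd_iff hdvd).1 hpz)
  obtain ⟨d, l, hd, hpd, hdz⟩ := H.exists_forall_apply_modEq hpz m
  obtain ⟨w, hw, hwz⟩ := exists_dvd_modEq (pow_pos H.left.pos (k + 1 + l)) (Nat.mul_pos hc hd)
    ((hpc.mul_right hpd).pow_left _) z
  have hwz' : (w : ℕ) ≡ z [MOD p ^ (k + 1)] := hwz.of_dvd (pow_dvd_pow p (Nat.le_add_right _ _))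
  have hpw : ¬ p ∣ w := fun hpw => hpz ((hwz'.dvd_iff hdvd).1 hpw)
  exact (hdz w hpw (dvd_of_mul_left_dvd hw) (hwz.of_dvd (pow_dvd_pow p (by omega)))).symm.trans
    (hcx w hpw (dvd_of_mul_right_dvd hw) ((hwz'.trans hzx).of_dvd (pow_dvd_pow p (by omega))))

lemma apply_mem_padicClosure (H : PrimeCorr h p q) {A : Set ℕ+} {y : ℕ+}
    (hy : y ∈ padicClosure p A) : h y ∈ padicClosure q (h '' A) := by
  obtain ⟨hpy, hy⟩ := (mem_padicClosure H.left.one_lt).1 hy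
  refine (mem_padicClosure H.right.one_lt).2 ⟨by rwa [← H.dvd_iff], fun m => ?_⟩
  obtain ⟨n, hn⟩ := H.exists_modEq_imp_apply_modEq hpy m
  obtain ⟨a, ha, hay⟩ := hy n
  exact ⟨h a, Set.mem_image_of_mem h ha, hn a hay⟩

lemma image_padicClosure (H : PrimeCorr h p q) (A : Set ℕ+) :
    h '' padicClosure p A = padicClosure q (h '' A) := by
  refine Set.Subset.antisymm (Set.image_subset_iff.2 fun y => H.apply_mem_padicClosure)
    fun z hz => ⟨h.symm z, ?_, h.apply_symm_apply z⟩
  simpa [Set.image_image] using H.symm.apply_mem_padicClosure hz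

lemma image_clPow (H : PrimeCorr h p q) (H' : PrimeCorr h p' q') :
    h '' clPow p p' = clPow q q' := by
  rw [clPow, H.image_padicClosure, H'.image_powSet, clPow]

end PrimeCorr

/-! ### Closures of cyclic groups of `p`-adic units -/

section ClosedCyclic

variable {r : ℕ}

lemma mem_clPow (hr : r.Prime) {a : ℕ} (ha : ¬ r ∣ a) {y : ℕ+} :
    y ∈ clPow r a ↔ ∀ n, ∃ k, a ^ k ≡ y [MOD r ^ n] := by
  rw [clPow, mem_padicClosure hr.one_lt]
  constructor
  · rintro ⟨-, hy⟩ n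
    obtain ⟨b, ⟨k, -, hk⟩, hb⟩ := hy n
    exact ⟨k, hk ▸ hb⟩
  · intro hy
    refine ⟨fun hry => ?_, fun n => ?_⟩
    · obtain ⟨k, hk⟩ := hy 1
      rw [pow_one] at hk
      exact ha (hr.dvd_of_dvd_pow ((hk.dvd_iff dvd_rfl).2 hry))
    · obtain ⟨k, hk⟩ := hy n
      have ha0 : 0 < a := Nat.pos_of_ne_zero (by rintro rfl; exact ha (dvd_zero r))
      have hpow : a ^ Nat.totient (r ^ n) ≡ 1 [MOD r ^ n] :=
        Nat.ModEq.pow_totient ((hr.coprime_iff_not_dvd.2 ha).symm.pow_right n)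
      refine ⟨⟨a ^ (k + Nat.totient (r ^ n)), pow_pos ha0 _⟩,
        ⟨_, Nat.add_pos_right k (Nat.totient_pos.2 (pow_pos hr.pos n)), rfl⟩, ?_⟩
      simpa [pow_add] using hk.mul hpow

lemma self_mem_clPow (hr : r.Prime) {a : ℕ+} (ha : ¬ r ∣ a) : a ∈ clPow r a :=
  (mem_clPow hr ha).2 fun _ => ⟨1, by rw [pow_one]⟩

lemma clPow_subset_clPow (hr : r.Prime) {a : ℕ} {b : ℕ+} (ha : ¬ r ∣ a) (hb : b ∈ clPow r a) :
    clPow r b ⊆ clPow r a := fun y hy => by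
  have hrb : ¬ r ∣ b := ((mem_padicClosure hr.one_lt).1 hb).1
  refine (mem_clPow hr ha).2 fun n => ?_
  obtain ⟨j, hj⟩ := (mem_clPow hr ha).1 hb n
  obtain ⟨k, hk⟩ := (mem_clPow hr hrb).1 hy n
  exact ⟨j * k, by simpa only [pow_mul] using (hj.pow k).trans hk⟩

lemma clPow_pow_subset (hr : r.Prime) {a : ℕ} (ha : ¬ r ∣ a) (m : ℕ) :
    clPow r (a ^ m) ⊆ clPow r a := fun y hy => by
  refine (mem_clPow hr ha).2 fun n => ?_
  obtain ⟨k, hk⟩ := (mem_clPow hr fun hram => ha (hr.dvd_of_dvd_pow hram)).1 hy n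
  exact ⟨m * k, by rwa [pow_mul]⟩

lemma mem_clPow_of_modEq (hr : r.Prime) {a v : ℕ} (ha : ¬ r ∣ a)
    (hsub : golombBasic 1 (r ^ v) ⊆ clPow r a) {b : ℕ+} (hb : (b : ℕ) ≡ a [MOD r ^ v]) :
    b ∈ clPow r a := by
  refine (mem_clPow hr ha).2 fun n => ?_
  have ha0 : 0 < a := Nat.pos_of_ne_zero (by rintro rfl; exact ha (dvd_zero r))
  obtain ⟨m, hm⟩ : ∃ m, a ^ (m + 1) ≡ 1 [MOD r ^ (n + v)] := by
    refine ⟨Nat.totient (r ^ (n + v)) - 1, ?_⟩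
    rw [Nat.sub_add_cancel (Nat.totient_pos.2 (pow_pos hr.pos _))]
    exact Nat.ModEq.pow_totient ((hr.coprime_iff_not_dvd.2 ha).symm.pow_right _)
  have hmv : b * a ^ m ≡ 1 [MOD r ^ v] := calc
    b * a ^ m ≡ a * a ^ m [MOD r ^ v] := hb.mul_right _
    _ = a ^ (m + 1) := (pow_succ' a m).symm
    _ ≡ 1 [MOD r ^ v] := hm.of_dvd (pow_dvd_pow r (Nat.le_add_left v n))
  have hmem : (⟨b * a ^ m, by positivity⟩ : ℕ+) ∈ clPow r a := hsub (mem_golombBasic_one.2 hmv)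
  obtain ⟨k, hk⟩ := (mem_clPow hr ha).1 hmem n
  refine ⟨k + 1, ?_⟩
  calc
    a ^ (k + 1) = a ^ k * a := pow_succ a k
    _ ≡ b * a ^ m * a [MOD r ^ n] := hk.mul_right a
    _ = b * a ^ (m + 1) := by ring
    _ ≡ b * 1 [MOD r ^ n] := (hm.of_dvd (pow_dvd_pow r (Nat.le_add_right n v))).mul_left _
    _ = b := mul_one _

lemma exists_lt_modEq_one_add_mul {b d m : ℕ} (hb : 0 < b) (hm : 0 < m) (hbd : b ≡ 1 [MOD d]) :
    ∃ j < m, b ≡ 1 + d * j [MOD d * m] := by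
  obtain ⟨t, ht⟩ := (Nat.modEq_iff_dvd' hb).1 hbd.symm
  obtain rfl : b = 1 + d * t := by omega
  exact ⟨t % m, Nat.mod_lt t hm, ((Nat.mod_modEq t m).symm.mul_left' d).add_left 1⟩

lemma exists_ge_modEq_one_not_modEq_one (hr : r.Prime) {a e : ℕ} (ha : 1 < a)
    (hae : a ≡ 1 [MOD r ^ e]) :
    ∃ v ≥ e, a ≡ 1 [MOD r ^ v] ∧ ¬ a ≡ 1 [MOD r ^ (v + 1)] := by
  have modEq_iff (n : ℕ) : a ≡ 1 [MOD r ^ n] ↔ r ^ n ∣ a - 1 :=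
    Nat.ModEq.comm.trans (Nat.modEq_iff_dvd' ha.le)
  have hfin : FiniteMultiplicity r (a - 1) :=
    Nat.finiteMultiplicity_iff.2 ⟨hr.ne_one, Nat.sub_pos_of_lt ha⟩
  simp only [modEq_iff] at hae ⊢
  exact ⟨multiplicity r (a - 1), hfin.le_multiplicity_of_pow_dvd hae, pow_multiplicity_dvd r _,
    hfin.not_pow_dvd_of_multiplicity_lt (Nat.lt_succ_self _)⟩

/- The condition `2 < r ^ v` says that `-1` does not belong to the group `1 + r ^ v ℤ_r`, which is
then procyclic. -/
lemma orderOf_natCast_zmod_prime_pow (hr : r.Prime) {a v : ℕ} (hv : 2 < r ^ v)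
    (ha : a ≡ 1 [MOD r ^ v]) (ha' : ¬ a ≡ 1 [MOD r ^ (v + 1)]) (n : ℕ) :
    orderOf (a : ZMod (r ^ (n + v))) = r ^ n := by
  have hv0 : v ≠ 0 := by rintro rfl; simp at hv
  have ha0 : 0 < a := Nat.pos_of_ne_zero <| by
    rintro rfl
    have := Nat.dvd_one.1 ((Nat.modEq_iff_dvd' zero_le_one).1 ha)
    omega
  obtain ⟨x, hx⟩ := (Nat.modEq_iff_dvd' ha0).1 ha.symm
  obtain rfl : a = 1 + r ^ v * x := by omega
  have hrx : ¬ r ∣ x := by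
    rintro ⟨y, rfl⟩
    refine ha' ((Nat.modEq_iff_dvd' ha0).2 ⟨y, ?_⟩).symm
    rw [Nat.add_sub_cancel_left, pow_succ, mul_assoc]
  have hvr : v + 2 ≤ r * v := by
    rcases hr.two_le.eq_or_lt with rfl | h3
    · have : v ≠ 1 := by rintro rfl; simp at hv
      omega
    · nlinarith [Nat.pos_of_ne_zero hv0]
  simpa using ZMod.orderOf_one_add_mul_prime_pow hr v hv0 hvr x (by exact_mod_cast hrx) n

lemma exists_pow_modEq_of_modEq_one (hr : r.Prime) {a v : ℕ} (hv : 2 < r ^ v) (ha0 : 0 < a)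
    (ha : a ≡ 1 [MOD r ^ v]) (ha' : ¬ a ≡ 1 [MOD r ^ (v + 1)]) {y : ℕ} (hy0 : 0 < y)
    (hy : y ≡ 1 [MOD r ^ v]) (n : ℕ) : ∃ k, a ^ k ≡ y [MOD r ^ (n + v)] := by
  -- There are as many powers of `a` as there are residues `1 + r ^ v * j`.
  let powers := (Finset.range (r ^ n)).image fun k => (a : ZMod (r ^ (n + v))) ^ k
  let residues := (Finset.range (r ^ n)).image fun j : ℕ =>
    ((1 + r ^ v * j : ℕ) : ZMod (r ^ (n + v)))
  have mem_residues {b : ℕ} (hb0 : 0 < b) (hb : b ≡ 1 [MOD r ^ v]) :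
      (b : ZMod (r ^ (n + v))) ∈ residues := by
    obtain ⟨j, hj, hbj⟩ := exists_lt_modEq_one_add_mul hb0 (pow_pos hr.pos n) hb
    rw [← pow_add, add_comm v n] at hbj
    exact Finset.mem_image.2 ⟨j, Finset.mem_range.2 hj,
      ((ZMod.natCast_eq_natCast_iff _ _ _).2 hbj).symm⟩
  have hsub : powers ⊆ residues := Finset.image_subset_iff.2 fun k _ => by
    simpa using mem_residues (pow_pos ha0 k) (by simpa using ha.pow k)
  have hcard : residues.card ≤ powers.card := calc
    residues.card ≤ r ^ n := Finset.card_image_le.trans_eq (Finset.card_range _)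
    _ = powers.card := by
      rw [Finset.card_image_of_injOn, Finset.card_range]
      intro i hi j hj
      rw [Finset.coe_range, ← orderOf_natCast_zmod_prime_pow hr hv ha ha' n] at hi hj
      exact pow_injOn_Iio_orderOf hi hj
  have hyp : (y : ZMod (r ^ (n + v))) ∈ powers := by
    rw [Finset.eq_of_subset_of_card_le hsub hcard]
    exact mem_residues hy0 hy
  obtain ⟨k, -, hk⟩ := Finset.mem_image.1 hyp
  exact ⟨k, (ZMod.natCast_eq_natCast_iff _ _ _).1 (by simpa using hk)⟩

lemma clPow_eq_golombBasic (hr : r.Prime) {a v : ℕ} (hv : 2 < r ^ v)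
    (ha : a ≡ 1 [MOD r ^ v]) (ha' : ¬ a ≡ 1 [MOD r ^ (v + 1)]) :
    clPow r a = golombBasic 1 (r ^ v) := by
  have hv0 : v ≠ 0 := by rintro rfl; simp at hv
  have hra : ¬ r ∣ a := fun hra =>
    hr.not_dvd_one ((ha.dvd_iff (dvd_pow_self r hv0)).1 hra)
  have ha0 : 0 < a := Nat.pos_of_ne_zero (by rintro rfl; exact hra (dvd_zero r))
  ext y
  rw [mem_clPow hr hra, mem_golombBasic_one]
  constructor
  · intro hy
    obtain ⟨k, hk⟩ := hy v
    simpa using hk.symm.trans (ha.pow k)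
  · intro hy n
    obtain ⟨k, hk⟩ := exists_pow_modEq_of_modEq_one hr hv ha0 ha ha' y.pos hy n
    exact ⟨k, hk.of_dvd (pow_dvd_pow r (Nat.le_add_right n v))⟩

lemma clPow_one_add_pow (hr : r.Prime) {v : ℕ} (hv : 2 < r ^ v) :
    clPow r (1 + r ^ v) = golombBasic 1 (r ^ v) := by
  refine clPow_eq_golombBasic hr hv (by simp [Nat.ModEq]) fun hmod => ?_
  have hdvd : r ^ (v + 1) ∣ r ^ v := by
    simpa using (Nat.modEq_iff_dvd' (Nat.le_add_right 1 (r ^ v))).1 hmod.symm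
  have := (Nat.pow_dvd_pow_iff_le_right hr.one_lt).1 hdvd
  omega

lemma exists_ge_clPow_eq_golombBasic (hr : r.Prime) {a e : ℕ} (he : 2 < r ^ e) (ha : 1 < a)
    (hae : a ≡ 1 [MOD r ^ e]) : ∃ v ≥ e, clPow r a = golombBasic 1 (r ^ v) := by
  obtain ⟨v, hev, hav, hav'⟩ := exists_ge_modEq_one_not_modEq_one hr ha hae
  exact ⟨v, hev,
    clPow_eq_golombBasic hr (he.trans_le (Nat.pow_le_pow_right hr.pos hev)) hav hav'⟩

lemma exists_prime_clPow_eq (hr : r.Prime) {a : ℕ} (ha : 1 < a) (hra : ¬ r ∣ a) :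
    ∃ s, s.Prime ∧ s ≠ r ∧ clPow r s = clPow r a := by
  lift a to ℕ+ using zero_lt_one.trans ha
  have hcop : (a : ℕ).Coprime r := (hr.coprime_iff_not_dvd.2 hra).symm
  have hm : Nat.totient (r ^ 2) ≠ 0 := (Nat.totient_pos.2 (pow_pos hr.pos 2)).ne'
  generalize hme : Nat.totient (r ^ 2) = m at hm
  have ham : (a : ℕ) ^ m ≡ 1 [MOD r ^ 2] := hme ▸ Nat.ModEq.pow_totient (hcop.pow_right 2)
  obtain ⟨v, hv, hav, hav'⟩ := exists_ge_modEq_one_not_modEq_one hr (one_lt_pow₀ ha hm) ham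
  have h2 : 2 < r ^ v := calc
    2 < 2 ^ 2 := by norm_num
    _ ≤ r ^ 2 := Nat.pow_le_pow_left hr.two_le 2
    _ ≤ r ^ v := Nat.pow_le_pow_right hr.pos hv
  obtain ⟨s, hrs, hs, hsa⟩ := Nat.forall_exists_prime_gt_and_modEq r
    (pow_pos hr.pos (v + 1)).ne' (hcop.pow_right (v + 1))
  lift s to ℕ+ using hs.pos
  have hsv : (s : ℕ) ≡ a [MOD r ^ v] := hsa.of_dvd (pow_dvd_pow r v.le_succ)
  have hrs' : ¬ r ∣ s := fun hdvd => hrs.ne ((Nat.prime_dvd_prime_iff_eq hr hs).1 hdvd)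
  have hsub {b : ℕ} (hrb : ¬ r ∣ b) (hba : b ≡ a [MOD r ^ (v + 1)]) :
      golombBasic 1 (r ^ v) ⊆ clPow r b := by
    rw [← clPow_eq_golombBasic hr h2
      (((hba.pow m).of_dvd (pow_dvd_pow r v.le_succ)).trans hav)
      fun hbm => hav' ((hba.pow m).symm.trans hbm)]
    exact clPow_pow_subset hr hrb m
  exact ⟨s, hs, hrs.ne', Set.Subset.antisymm
    (clPow_subset_clPow hr hra (mem_clPow_of_modEq hr hra (hsub hra rfl) hsv))
    (clPow_subset_clPow hr hrs' (mem_clPow_of_modEq hr hrs' (hsub hrs' hsa) hsv.symm))⟩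

/-! ### The partially ordered sets `XX r` -/

lemma mem_XX {X : Set ℕ+} : X ∈ XX r ↔ ∃ a : ℕ+, 1 < (a : ℕ) ∧ ¬ r ∣ a ∧ X = clPow r a := by
  constructor
  · rintro ⟨a, ha, ha1, hra, rfl⟩
    exact ⟨⟨a, ha⟩, Nat.lt_of_le_of_ne ha ha1.symm, hra, rfl⟩
  · rintro ⟨a, ha, hra, rfl⟩
    exact ⟨a, a.pos, ha.ne', hra, rfl⟩

lemma mem_XX_iff_exists_prime (hr : r.Prime) {X : Set ℕ+} :
    X ∈ XX r ↔ ∃ s, s.Prime ∧ s ≠ r ∧ X = clPow r s := by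
  rw [mem_XX]
  constructor
  · rintro ⟨a, ha, hra, rfl⟩
    obtain ⟨s, hs, hsr, hsa⟩ := exists_prime_clPow_eq hr ha hra
    exact ⟨s, hs, hsr, hsa.symm⟩
  · rintro ⟨s, hs, hsr, rfl⟩
    exact ⟨⟨s, hs.pos⟩, hs.one_lt, fun hrs => hsr ((Nat.prime_dvd_prime_iff_eq hr hs).1 hrs).symm,
      rfl⟩

lemma golombBasic_mem_XX (hr : r.Prime) {n : ℕ} (hn : 2 < r ^ n) :
    golombBasic 1 (r ^ n) ∈ XX r := by
  have hn0 : n ≠ 0 := by rintro rfl; simp at hn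
  refine ⟨1 + r ^ n, by omega, by omega, ?_, (clPow_one_add_pow hr hn).symm⟩
  rw [← Nat.dvd_add_iff_left (dvd_pow_self r hn0)]
  exact hr.not_dvd_one

lemma exists_eq_golombBasic_of_subset (hr : r.Prime) {e : ℕ} (he : 2 < r ^ e) {X : Set ℕ+}
    (hX : X ∈ XX r) (hsub : X ⊆ golombBasic 1 (r ^ e)) : ∃ v ≥ e, X = golombBasic 1 (r ^ v) := by
  obtain ⟨a, ha, hra, rfl⟩ := mem_XX.1 hX
  exact exists_ge_clPow_eq_golombBasic hr he ha
    (mem_golombBasic_one.1 (hsub (self_mem_clPow hr hra)))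

lemma isChain_XX_of_subset_golombBasic (hr : r.Prime) {e : ℕ} (he : 2 < r ^ e) :
    IsChain (· ⊆ ·) {X ∈ XX r | X ⊆ golombBasic 1 (r ^ e)} := by
  rintro _ ⟨hX, hXe⟩ _ ⟨hY, hYe⟩ -
  obtain ⟨m, -, rfl⟩ := exists_eq_golombBasic_of_subset hr he hX hXe
  obtain ⟨n, -, rfl⟩ := exists_eq_golombBasic_of_subset hr he hY hYe
  exact (le_total n m).imp ((strictAnti_golombBasic_one_pow hr.one_lt).antitone ·)
    ((strictAnti_golombBasic_one_pow hr.one_lt).antitone ·)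

lemma exists_pow_modEq_of_clPow_pow_subset (hr : r.Prime) {a k m : ℕ} (hra : ¬ r ∣ a)
    (hsub : clPow r (a ^ k) ⊆ clPow r (a ^ m)) (n : ℕ) :
    ∃ j, a ^ (m * j) ≡ a ^ k [MOD r ^ n] := by
  have hra' (i : ℕ) : ¬ r ∣ a ^ i := fun hdvd => hra (hr.dvd_of_dvd_pow hdvd)
  have hak : 0 < a ^ k := Nat.pos_of_ne_zero fun h0 => hra' k (h0 ▸ dvd_zero r)
  obtain ⟨j, hj⟩ := (mem_clPow hr (hra' m)).1
    (hsub (self_mem_clPow hr (a := ⟨a ^ k, hak⟩) (hra' k))) n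
  exact ⟨j, by rwa [pow_mul]⟩

lemma pow_sub_one_modEq_one (hr : r.Prime) {a : ℕ} (hra : ¬ r ∣ a) :
    a ^ (r - 1) ≡ 1 [MOD r] := by
  rw [← Nat.totient_prime hr]
  exact Nat.ModEq.pow_totient (hr.coprime_iff_not_dvd.2 hra).symm

lemma modEq_one_of_clPow_pow_subset (hr : r.Prime) {a : ℕ} (hra : ¬ r ∣ a)
    (hsub : clPow r (a ^ r) ⊆ clPow r (a ^ (r - 1))) : a ≡ 1 [MOD r] := by
  obtain ⟨j, hj⟩ := exists_pow_modEq_of_clPow_pow_subset hr hra hsub 1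
  have hfermat := pow_sub_one_modEq_one hr hra
  calc
    a ≡ a ^ (r - 1) * a [MOD r] := by simpa using (hfermat.mul_right a).symm
    _ = a ^ r := pow_sub_one_mul hr.ne_zero a
    _ ≡ a ^ ((r - 1) * j) [MOD r] := (pow_one r ▸ hj).symm
    _ ≡ 1 [MOD r] := by simpa [pow_mul] using hfermat.pow j

lemma not_clPow_pow_subset_clPow_pow_self (hr : r.Prime) (hr2 : r ≠ 2) {a : ℕ} (ha : 1 < a)
    (hra : ¬ r ∣ a) : ¬ clPow r (a ^ (r - 1)) ⊆ clPow r (a ^ r) := fun hsub => by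
  have h2r : 2 < r := lt_of_le_of_ne' hr.two_le hr2
  -- If `b = a ^ (r - 1)`, then `b ^ (r - 1)` is a power of `b ^ r` to any `r`-adic precision,
  -- but not modulo `r ^ (v + 1)`, where `b` has order `r`.
  have hb := pow_sub_one_modEq_one hr hra
  have hb1 : 1 < a ^ (r - 1) := one_lt_pow₀ ha (by omega)
  obtain ⟨v, hv, hbv, hbv'⟩ :=
    exists_ge_modEq_one_not_modEq_one hr (e := 1) hb1 (by rwa [pow_one])
  obtain ⟨j, hj⟩ := exists_pow_modEq_of_clPow_pow_subset hr hra hsub (1 + v)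
  have horder := orderOf_natCast_zmod_prime_pow hr (h2r.trans_le (Nat.le_pow hv)) hbv hbv' 1
  rw [pow_one] at horder
  have hpow : (a ^ (r - 1)) ^ (r * j) ≡ (a ^ (r - 1)) ^ (r - 1) [MOD r ^ (1 + v)] := by
    simpa only [← pow_mul, mul_comm (r - 1)] using hj.pow (r - 1)
  generalize a ^ (r - 1) = b at horder hpow
  have hdvd : r ∣ r - 1 := by
    rw [← ZMod.natCast_eq_natCast_iff, Nat.cast_pow, Nat.cast_pow] at hpow
    rw [← horder, orderOf_dvd_iff_pow_eq_one, horder, ← hpow, ← orderOf_dvd_iff_pow_eq_one, horder]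
    exact dvd_mul_right r j
  exact Nat.not_dvd_of_pos_of_lt (by omega) (by omega) hdvd

lemma modEq_one_of_isChain (hr : r.Prime) (hr2 : r ≠ 2) {a : ℕ+} (ha : 1 < (a : ℕ))
    (hra : ¬ r ∣ a) (hchain : IsChain (· ⊆ ·) {X ∈ XX r | X ⊆ clPow r a}) :
    (a : ℕ) ≡ 1 [MOD r] := by
  have pow_mem {k : ℕ} (hk : k ≠ 0) : clPow r (a ^ k) ∈ {X ∈ XX r | X ⊆ clPow r a} :=
    ⟨⟨a ^ k, pow_pos a.pos k, (one_lt_pow₀ ha hk).ne', fun hdvd => hra (hr.dvd_of_dvd_pow hdvd),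
      rfl⟩, clPow_pow_subset hr hra k⟩
  exact modEq_one_of_clPow_pow_subset hr hra
    ((hchain.total (pow_mem hr.ne_zero) (pow_mem (Nat.sub_ne_zero_of_lt hr.one_lt))).resolve_right
      (not_clPow_pow_subset_clPow_pow_self hr hr2 ha hra))

lemma setOf_isChain_XX (hr : r.Prime) (hr2 : r ≠ 2) :
    {X ∈ XX r | IsChain (· ⊆ ·) {Y ∈ XX r | Y ⊆ X}} =
      (fun n => golombBasic 1 (r ^ n)) '' Set.Ici 1 := by
  have h2r : 2 < r ^ 1 := by simpa using lt_of_le_of_ne' hr.two_le hr2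
  ext X
  constructor
  · rintro ⟨hX, hchain⟩
    obtain ⟨a, ha, hra, rfl⟩ := mem_XX.1 hX
    obtain ⟨v, hv, hav⟩ := exists_ge_clPow_eq_golombBasic hr h2r ha
      (by simpa using modEq_one_of_isChain hr hr2 ha hra hchain)
    exact ⟨v, hv, hav.symm⟩
  · rintro ⟨n, hn, rfl⟩
    have h2n : 2 < r ^ n := h2r.trans_le (Nat.pow_le_pow_right hr.pos hn)
    exact ⟨golombBasic_mem_XX hr h2n, isChain_XX_of_subset_golombBasic hr h2n⟩

end ClosedCyclic

lemma exists_pow_pow_modEq_of_odd {b k : ℕ} (hb : Odd b) (hk : Odd k) (n : ℕ) :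
    ∃ j, (b ^ k) ^ j ≡ b [MOD 2 ^ n] := by
  have hpow : (b : ZMod (2 ^ (n + 1))) ^ 2 ^ n = 1 := by
    have htot := Nat.ModEq.pow_totient (hb.coprime_two_right.pow_right (n + 1))
    rw [Nat.totient_prime_pow_succ Nat.prime_two] at htot
    simpa using (ZMod.natCast_eq_natCast_iff _ _ _).2 htot
  have hcop : k.Coprime (orderOf (b : ZMod (2 ^ (n + 1)))) :=
    (hk.coprime_two_right.pow_right n).coprime_dvd_right (orderOf_dvd_of_pow_eq_one hpow)
  obtain ⟨j, hj⟩ := exists_pow_eq_self_of_coprime hcop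
  refine ⟨j, Nat.ModEq.of_dvd (pow_dvd_pow 2 n.le_succ) ?_⟩
  exact (ZMod.natCast_eq_natCast_iff _ _ _).1 (by simpa using hj)

lemma modEq_one_of_clPow_two_ssubset {a b : ℕ+} (ha : ¬ 2 ∣ (a : ℕ)) (hb : ¬ 2 ∣ (b : ℕ))
    (hsub : clPow 2 a ⊂ clPow 2 b) : (a : ℕ) ≡ 1 [MOD 2 ^ 3] := by
  have hbodd : Odd (b : ℕ) := by rwa [← Nat.not_even_iff_odd, even_iff_two_dvd]
  by_contra ha8
  -- As `a ≢ 1` modulo `8`, it can only be congruent to an odd power of `b`, which then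
  -- generates the same group as `b`.
  refine hsub.not_subset (clPow_subset_clPow Nat.prime_two ha ?_)
  refine (mem_clPow Nat.prime_two ha).2 fun n => ?_
  obtain ⟨k, hk⟩ := (mem_clPow Nat.prime_two hb).1
    (hsub.subset (self_mem_clPow Nat.prime_two ha)) (n + 3)
  have hkodd : Odd k := by
    by_contra hkeven
    obtain ⟨l, rfl⟩ := (Nat.not_odd_iff_even.1 hkeven).two_dvd
    have hsq : (b : ℕ) ^ 2 ≡ 1 [MOD 2 ^ 3] :=
      ((Nat.modEq_iff_dvd' (pow_pos b.pos 2)).2 (Nat.eight_dvd_sq_sub_one_of_odd hbodd)).symm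
    exact ha8 ((hk.of_dvd (pow_dvd_pow 2 (Nat.le_add_left 3 n))).symm.trans
      (by simpa [pow_mul] using hsq.pow l))
  obtain ⟨j, hj⟩ := exists_pow_pow_modEq_of_odd hbodd hkodd n
  exact ⟨j, ((hk.of_dvd (pow_dvd_pow 2 (Nat.le_add_right n 3))).symm.pow j).trans hj⟩

lemma exists_eq_golombBasic_of_ssubset {X Y : Set ℕ+} (hX : X ∈ XX 2) (hY : Y ∈ XX 2)
    (hXY : X ⊂ Y) : ∃ n ≥ 3, X = golombBasic 1 (2 ^ n) := by
  obtain ⟨a, ha1, ha, rfl⟩ := mem_XX.1 hX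
  obtain ⟨b, -, hb, rfl⟩ := mem_XX.1 hY
  exact exists_ge_clPow_eq_golombBasic Nat.prime_two (by norm_num) ha1
    (modEq_one_of_clPow_two_ssubset ha hb hXY)

lemma setOf_exists_ssubset_XX_two :
    {X ∈ XX 2 | ∃ Y ∈ XX 2, X ⊂ Y} = (fun n => golombBasic 1 (2 ^ n)) '' Set.Ici 3 := by
  ext X
  constructor
  · rintro ⟨hX, Y, hY, hXY⟩
    obtain ⟨n, hn, rfl⟩ := exists_eq_golombBasic_of_ssubset hX hY hXY
    exact ⟨n, hn, rfl⟩
  · rintro ⟨n, hn, rfl⟩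
    have mem {k : ℕ} (hk : 2 ≤ k) : golombBasic 1 (2 ^ k) ∈ XX 2 :=
      golombBasic_mem_XX Nat.prime_two
        (lt_of_lt_of_le (by norm_num) (Nat.pow_le_pow_right two_pos hk))
    have hn : 3 ≤ n := hn
    exact ⟨mem (by omega), _, mem le_rfl,
      strictAnti_golombBasic_one_pow one_lt_two (show 2 < n by omega)⟩

lemma isChain_XX_two {X : Set ℕ+} (hX : X ∈ XX 2) : IsChain (· ⊆ ·) {Y ∈ XX 2 | Y ⊆ X} := by
  rintro Y ⟨hY, hYX⟩ Z ⟨hZ, hZX⟩ -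
  rcases hYX.eq_or_ssubset with rfl | hYX
  · exact Or.inr hZX
  rcases hZX.eq_or_ssubset with rfl | hZX
  · exact Or.inl hYX.subset
  obtain ⟨m, -, rfl⟩ := exists_eq_golombBasic_of_ssubset hY hX hYX
  obtain ⟨n, -, rfl⟩ := exists_eq_golombBasic_of_ssubset hZ hX hZX
  exact (le_total n m).imp ((strictAnti_golombBasic_one_pow one_lt_two).antitone ·)
    ((strictAnti_golombBasic_one_pow one_lt_two).antitone ·)

/-! ### The action of a homeomorphism on the sets `1 + p^nℕ₀` -/

lemma eqOn_of_strictAntiOn_of_image_eq {α β : Type*} [LinearOrder α] [WellFoundedLT α]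
    [Preorder β] {f g : α → β} {s : Set α} (hf : StrictAntiOn f s) (hg : StrictAntiOn g s)
    (hfg : f '' s = g '' s) : s.EqOn f g := by
  rw [← Set.domRestrict_eq_domRestrict_iff]
  refine (StrictMono.range_inj (γ := βᵒᵈ) (f := s.domRestrict f) (g := s.domRestrict g)
    (fun x y hxy => hf x.2 y.2 hxy) (fun x y hxy => hg x.2 y.2 hxy)).1 ?_
  exact (Set.range_domRestrict f s).trans (hfg.trans (Set.range_domRestrict g s).symm)

lemma image_golombBasic_one_eq_iff {f : ℕ+ → ℕ+} (hf : f.Bijective) {a b : ℕ} :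
    f '' golombBasic 1 a = golombBasic 1 b ↔ ∀ x : ℕ+, a ∣ x - 1 ↔ b ∣ f x - 1 := by
  have mem_iff (c : ℕ) (x : ℕ+) : x ∈ golombBasic 1 c ↔ c ∣ x - 1 := by
    rw [mem_golombBasic_one, Nat.ModEq.comm, Nat.modEq_iff_dvd' x.pos]
  rw [Set.ext_iff, hf.surjective.forall]
  simp only [hf.injective.mem_set_image, mem_iff]

namespace PrimeCorr

variable {h : ℕ+ ≃ₜ ℕ+} {p q : ℕ}

lemma image_mem_XX (H : PrimeCorr h p q) {X : Set ℕ+} (hX : X ∈ XX p) : h '' X ∈ XX q := by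
  obtain ⟨s, hs, hsp, rfl⟩ := (mem_XX_iff_exists_prime H.left).1 hX
  obtain ⟨t, Hs⟩ := exists_right h hs
  refine (mem_XX_iff_exists_prime H.right).2 ⟨t, Hs.right, ?_, H.image_clPow Hs⟩
  rintro rfl
  exact hsp (Hs.left_unique H)

lemma image_XX (H : PrimeCorr h p q) : (h '' ·) '' XX p = XX q := by
  refine Set.Subset.antisymm (Set.image_subset_iff.2 fun X => H.image_mem_XX) fun X hX => ?_
  exact ⟨h.symm '' X, H.symm.image_mem_XX hX, by simp [Set.image_image]⟩

lemma image_setOf_mem_XX (H : PrimeCorr h p q) {P Q : Set ℕ+ → Prop}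
    (hPQ : ∀ X, P X ↔ Q (h '' X)) : (h '' ·) '' {X ∈ XX p | P X} = {X ∈ XX q | Q X} := by
  rw [← H.image_XX]
  ext X
  constructor
  · rintro ⟨Y, ⟨hY, hP⟩, rfl⟩
    exact ⟨⟨Y, hY, rfl⟩, (hPQ Y).1 hP⟩
  · rintro ⟨⟨Y, hY, rfl⟩, hQ⟩
    exact ⟨Y, ⟨hY, (hPQ Y).2 hQ⟩, rfl⟩

lemma isChain_iff (H : PrimeCorr h p q) (X : Set ℕ+) :
    IsChain (· ⊆ ·) {Y ∈ XX p | Y ⊆ X} ↔ IsChain (· ⊆ ·) {Y ∈ XX q | Y ⊆ h '' X} := by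
  have hsub (Y : Set ℕ+) : Y ⊆ X ↔ h '' Y ⊆ h '' X :=
    (Set.image_subset_image_iff h.injective).symm
  rw [← H.image_setOf_mem_XX (Q := (· ⊆ h '' X)) hsub]
  unfold IsChain
  rw [h.injective.image_injective.injOn.pairwise_image]
  simp +unfoldPartialApp only [Function.onFun, Set.image_subset_image_iff h.injective]

lemma exists_ssubset_iff (H : PrimeCorr h p q) (X : Set ℕ+) :
    (∃ Y ∈ XX p, X ⊂ Y) ↔ ∃ Y ∈ XX q, h '' X ⊂ Y := by
  rw [← H.image_XX]
  simp only [Set.exists_mem_image, ssubset_iff_subset_not_subset,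
    Set.image_subset_image_iff h.injective]

lemma eq_two (H : PrimeCorr h 2 q) : q = 2 := by
  by_contra hq2
  have hq : ¬ q ∣ 2 := mt (Nat.prime_dvd_prime_iff_eq H.right Nat.prime_two).1 hq2
  obtain ⟨X, hX, hX2⟩ : clPow q 2 ∈ (h '' ·) '' XX 2 := by
    rw [H.image_XX]
    exact ⟨2, two_pos, by norm_num, hq, rfl⟩
  have hmod := modEq_one_of_isChain H.right hq2 (a := 2) one_lt_two hq
    (hX2 ▸ (H.isChain_iff X).1 (isChain_XX_two hX))
  exact H.right.not_dvd_one ((Nat.modEq_iff_dvd' one_le_two).1 hmod.symm)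

lemma two_two (h : ℕ+ ≃ₜ ℕ+) : PrimeCorr h 2 2 := by
  obtain ⟨q, H⟩ := exists_right h Nat.prime_two
  exact H.eq_two ▸ H

lemma image_golombBasic_of_le (H : PrimeCorr h p q) {e n : ℕ}
    (himage : (fun n => h '' golombBasic 1 (p ^ n)) '' Set.Ici e =
      (fun n => golombBasic 1 (q ^ n)) '' Set.Ici e) (hn : e ≤ n) :
    h '' golombBasic 1 (p ^ n) = golombBasic 1 (q ^ n) :=
  eqOn_of_strictAntiOn_of_image_eq
    ((h.injective.image_strictMono.comp_strictAnti
      (strictAnti_golombBasic_one_pow H.left.one_lt)).strictAntiOn _)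
    ((strictAnti_golombBasic_one_pow H.right.one_lt).strictAntiOn _) himage hn

lemma image_golombBasic_of_ne_two (H : PrimeCorr h p q) (hp2 : p ≠ 2) {n : ℕ} (hn : 0 < n) :
    h '' golombBasic 1 (p ^ n) = golombBasic 1 (q ^ n) := by
  have hq2 : q ≠ 2 := by
    rintro rfl
    exact hp2 H.symm.eq_two
  refine H.image_golombBasic_of_le (e := 1) ?_ hn
  rw [← setOf_isChain_XX H.right hq2, ← H.image_setOf_mem_XX H.isChain_iff,
    setOf_isChain_XX H.left hp2, Set.image_image]

lemma image_golombBasic_two_of_three_le (h : ℕ+ ≃ₜ ℕ+) {n : ℕ} (hn : 3 ≤ n) :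
    h '' golombBasic 1 (2 ^ n) = golombBasic 1 (2 ^ n) := by
  refine (two_two h).image_golombBasic_of_le ?_ hn
  rw [← setOf_exists_ssubset_XX_two,
    ← (two_two h).image_setOf_mem_XX (two_two h).exists_ssubset_iff,
    setOf_exists_ssubset_XX_two, Set.image_image]

lemma image_golombBasic_two_one (h : ℕ+ ≃ₜ ℕ+) : h '' golombBasic 1 2 = golombBasic 1 2 := by
  refine (image_golombBasic_one_eq_iff h.bijective).2 fun x => ?_
  have hiff := (two_two h).dvd_iff x
  have hx := x.pos
  have hhx := (h x).pos
  omega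

lemma pow_dvd_sub_one_iff_of_ne_two (H : PrimeCorr h p q) (hp2 : p ≠ 2) {n : ℕ} (hn : 0 < n)
    (x : ℕ+) : p ^ n ∣ x - 1 ↔ q ^ n ∣ h x - 1 :=
  (image_golombBasic_one_eq_iff h.bijective).1 (H.image_golombBasic_of_ne_two hp2 hn) x

lemma dvd_of_forall_pow_dvd (h : ℕ+ ≃ₜ ℕ+) {k m : ℕ}
    (hkm : ∀ p q n : ℕ, PrimeCorr h p q → 0 < n → q ^ n ∣ k → q ^ n ∣ m) : k ∣ m := by
  refine (Nat.dvd_iff_prime_pow_dvd_dvd m k).2 fun q n hq hqn => ?_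
  obtain rfl | hn := n.eq_zero_or_pos
  · simp
  obtain ⟨p, H⟩ := exists_left h hq
  exact hkm p q n H hn hqn

lemma apply_sub_one_dvd_four (h : ℕ+ ≃ₜ ℕ+) {x : ℕ+} (hx : (x : ℕ) - 1 ∣ 2 ^ 2) :
    (h x : ℕ) - 1 ∣ 2 ^ 2 := by
  refine dvd_of_forall_pow_dvd h fun p q n H hn hqn => ?_
  rcases eq_or_ne p 2 with rfl | hp2
  · obtain rfl := H.eq_two
    refine pow_dvd_pow 2 (not_lt.1 fun hn3 => ?_)
    have hdvd := (image_golombBasic_one_eq_iff h.bijective).1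
      (image_golombBasic_two_of_three_le h hn3) x
    have := (Nat.pow_dvd_pow_iff_le_right one_lt_two).1 ((hdvd.2 hqn).trans hx)
    omega
  · have hpx := (H.pow_dvd_sub_one_iff_of_ne_two hp2 hn x).2 hqn
    have hp4 := (dvd_pow_self p hn.ne').trans (hpx.trans hx)
    exact absurd (Nat.prime_eq_prime_of_dvd_pow H.left Nat.prime_two hp4) hp2

lemma apply_eq_three_or_five (h : ℕ+ ≃ₜ ℕ+) {x : ℕ+} (hx2 : ¬ 2 ∣ (x : ℕ))
    (hx : (x : ℕ) - 1 ∣ 2 ^ 2) : (h x : ℕ) = 3 ∨ (h x : ℕ) = 5 := by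
  have hodd : ¬ 2 ∣ (h x : ℕ) := by rwa [← (two_two h).dvd_iff]
  obtain ⟨k, hk, hhx⟩ := (Nat.dvd_prime_pow Nat.prime_two).1 (apply_sub_one_dvd_four h hx)
  interval_cases k <;> omega

lemma apply_four (H : PrimeCorr h 3 q) : (h 4 : ℕ) = q + 1 := by
  have hq : q ∣ h 4 - 1 := by
    simpa using (H.pow_dvd_sub_one_iff_of_ne_two (by norm_num) one_pos 4).1 (by decide)
  have heven : 2 ∣ (h 4 : ℕ) := ((two_two h).dvd_iff 4).1 (by decide)
  have hdvd : (h 4 : ℕ) - 1 ∣ q := dvd_of_forall_pow_dvd h fun p s n Hp hn hsn => ?_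
  · have := Nat.dvd_antisymm hq hdvd
    have := (h 4).pos
    omega
  have hp2 : p ≠ 2 := by
    rintro rfl
    obtain rfl := Hp.eq_two
    have := (dvd_pow_self 2 hn.ne').trans hsn
    have := (h 4).pos
    omega
  have hpn : p ^ n ∣ 3 := (Hp.pow_dvd_sub_one_iff_of_ne_two hp2 hn 4).2 hsn
  have hp3 : p = 3 := (Nat.prime_dvd_prime_iff_eq Hp.left Nat.prime_three).1
    ((dvd_pow_self p hn.ne').trans hpn)
  subst hp3
  rw [Hp.right_unique H]
  exact (pow_dvd_pow q ((Nat.pow_dvd_pow_iff_le_right (by norm_num)).1 hpn)).trans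
    (pow_one q).dvd

lemma three_three (h : ℕ+ ≃ₜ ℕ+) : PrimeCorr h 3 3 := by
  obtain ⟨q, H⟩ := exists_right h Nat.prime_three
  have hq : q ∣ h 3 := (H.dvd_iff 3).1 dvd_rfl
  obtain h3 | h3 := apply_eq_three_or_five h (x := 3) (by decide) (by decide)
  · rw [h3] at hq
    exact (Nat.prime_dvd_prime_iff_eq H.right Nat.prime_three).1 hq ▸ H
  · rw [h3] at hq
    obtain rfl := (Nat.prime_dvd_prime_iff_eq H.right Nat.prime_five).1 hq
    -- Now `h 4 = 6`, but `h` maps powers of two to powers of two.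
    have h4 := (mem_powSet_iff Nat.prime_two).1
      ((two_two h).apply_mem_powSet (x := 4) ⟨2, two_pos, rfl⟩) 3 Nat.prime_three
    rw [H.apply_four] at h4
    exact absurd (h4.1 (by norm_num)) (by norm_num)

lemma five_five (h : ℕ+ ≃ₜ ℕ+) : PrimeCorr h 5 5 := by
  obtain ⟨q, H⟩ := exists_right h Nat.prime_five
  have hq : q ∣ h 5 := (H.dvd_iff 5).1 dvd_rfl
  obtain h5 | h5 := apply_eq_three_or_five h (x := 5) (by decide) (by decide)
  · exact absurd (((three_three h).dvd_iff 5).2 (by rw [h5])) (by decide)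
  · rw [h5] at hq
    exact (Nat.prime_dvd_prime_iff_eq H.right Nat.prime_five).1 hq ▸ H

lemma image_golombBasic_two (h : ℕ+ ≃ₜ ℕ+) {n : ℕ} (hn : 0 < n) :
    h '' golombBasic 1 (2 ^ n) = golombBasic 1 (2 ^ n) := by
  obtain rfl | rfl | hn3 : n = 1 ∨ n = 2 ∨ 3 ≤ n := by omega
  · exact image_golombBasic_two_one h
  · -- The order on `XX 2` does not single out `1 + 4ℕ₀`, which is the closure of the powers of `5`.
    rw [← clPow_one_add_pow Nat.prime_two (by norm_num)]
    exact (two_two h).image_clPow (five_five h)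
  · exact image_golombBasic_two_of_three_le h hn3

lemma image_golombBasic (H : PrimeCorr h p q) {n : ℕ} (hn : 0 < n) :
    h '' golombBasic 1 (p ^ n) = golombBasic 1 (q ^ n) := by
  rcases eq_or_ne p 2 with rfl | hp2
  · rw [H.eq_two, image_golombBasic_two h hn]
  · exact H.image_golombBasic_of_ne_two hp2 hn

lemma coe_apply {p : ℕ+} (H : PrimeCorr h p q) : (h p : ℕ) = q := by
  lift q to ℕ+ using H.right.pos
  obtain ⟨j, -, hj⟩ : h.symm q ∈ powSet p :=
    H.symm.apply_mem_powSet ⟨1, one_pos, (pow_one _).symm⟩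
  -- A prime power dividing `h p - 1` comes from one dividing `p - 1`, hence `p ^ j - 1`.
  have hdvd : (h p : ℕ) - 1 ∣ q - 1 := dvd_of_forall_pow_dvd h fun s t n Hs hn htn => by
    have hiff := (image_golombBasic_one_eq_iff h.bijective).1 (Hs.image_golombBasic hn)
    have hs : s ^ n ∣ h.symm q - 1 := by
      rw [hj]
      simpa only [one_pow] using ((hiff p).2 htn).trans (Nat.sub_dvd_pow_sub_pow (p : ℕ) 1 j)
    simpa using (hiff _).1 hs
  have hle := Nat.le_of_dvd (Nat.sub_pos_of_lt H.right.one_lt) hdvd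
  have hge := Nat.le_of_dvd (h p).pos ((H.dvd_iff p).1 dvd_rfl)
  have := H.right.pos
  omega

end PrimeCorr

/-- For any homeomorphism `h` of the Golomb space, any prime `p` and any `n ∈ ℕ`,
`h(1 + p^nℕ₀) = 1 + h(p)^nℕ₀`. -/
theorem golomb_homeo_progressions (h : ℕ+ ≃ₜ ℕ+) (p : ℕ+) (hp : (p : ℕ).Prime)
    (n : ℕ) (hn : 0 < n) :
    h '' golombBasic 1 ((p : ℕ) ^ n) = golombBasic 1 ((↑(h p) : ℕ) ^ n) := by
  obtain ⟨q, H⟩ := PrimeCorr.exists_right h hp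
  rw [H.coe_apply, H.image_golombBasic hn]
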